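/- arXiv:1812.03255 — 2 statements merged into one kernel-verified Lean document; each statement's English description precedes it below -/
import Mathlib

section
/- The operators D₁⁻, …, D_{n−1}⁻ on K = 𝕜(x₁,…,xₙ) satisfy the Coxeter relations of the symmetric group Sₙ: Dᵢ⁻∘Dᵢ⁻ = id_K for all i; Dᵢ⁻∘Dⱼ⁻ = Dⱼ⁻∘Dᵢ⁻ whenever |i − j| ≥ 2; and Dᵢ⁻∘D_{i+1}⁻∘Dᵢ⁻ = D_{i+1}⁻∘Dᵢ⁻∘D_{i+1}⁻ for all 1 ≤ i ≤ n−2. Consequently there is a unique action of Sₙ on K by 𝕜-linear automorphisms in which the simple transposition (i, i+1) acts as Dᵢ⁻ (the '⊖-action' of Sₙ on K). -/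
noncomputable section

open MvPolynomial

/-- The `i`-th variable `xᵢ`, regarded as an element of the field `K` of rational
functions (the fraction field of `MvPolynomial (Fin n) 𝕜`). -/
def ratVar (𝕜 : Type*) [Field 𝕜] (n : ℕ) (K : Type*) [Field K]
    [Algebra (MvPolynomial (Fin n) 𝕜) K] (i : Fin n) : K :=
  algebraMap (MvPolynomial (Fin n) 𝕜) K (X i)

/-- The `𝕜`-linear operator `f ↦ s f - (f - s f) * c⁻¹`; with `s = sᵢ` and
`c = x_{i+1} - x_i` this is `Dᵢ⁻ = sᵢ − ∂ᵢ`, where `∂ᵢ f = (f - sᵢ f)/(x_{i+1} - x_i)`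
is the Demazure operator. -/
def demazureMinusAux (𝕜 : Type*) [Field 𝕜] (K : Type*) [Field K] [Algebra 𝕜 K]
    (s : K ≃ₐ[𝕜] K) (c : K) : Module.End 𝕜 K :=
  s.toLinearMap - (LinearMap.mulRight 𝕜 c⁻¹) ∘ₗ ((LinearMap.id : K →ₗ[𝕜] K) - s.toLinearMap)

/-- The operator `Dᵢ⁻ = sᵢ − ∂ᵢ` (with `0`-indexed variables, so `sᵢ` is induced by the
transposition of the variables `x i` and `x (i+1)`), built from a family `s` of
automorphisms of `K` indexed by permutations. -/
def DMinus (𝕜 : Type*) [Field 𝕜] {n : ℕ} (K : Type*) [Field K] [Algebra 𝕜 K]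
    [Algebra (MvPolynomial (Fin n) 𝕜) K]
    (s : Equiv.Perm (Fin n) → (K ≃ₐ[𝕜] K)) (i : ℕ) (hi : i + 1 < n) : Module.End 𝕜 K :=
  demazureMinusAux 𝕜 K (s (Equiv.swap ⟨i, Nat.lt_of_succ_lt hi⟩ ⟨i + 1, hi⟩))
    (ratVar 𝕜 n K ⟨i + 1, hi⟩ - ratVar 𝕜 n K ⟨i, Nat.lt_of_succ_lt hi⟩)

section BraidWords

variable {G : Type*} [Group G]

/-- The descending product `p (k + l - 1) * ⋯ * p (k + 1) * p k`. -/
def descProd (p : ℕ → G) (k : ℕ) : ℕ → G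
  | 0 => 1
  | l + 1 => p (k + l) * descProd p k l

theorem descProd_succ_right (p : ℕ → G) (k l : ℕ) :
    descProd p k (l + 1) = descProd p (k + 1) l * p k := by
  induction l with
  | zero => simp [descProd]
  | succ l ih =>
    rw [descProd, ih, descProd, mul_assoc, show k + (l + 1) = k + 1 + l by ring]

/-- The Coxeter relations of type `A` for the elements `p 0, …, p (N - 1)`. -/
structure IsCoxeterFamily (p : ℕ → G) (N : ℕ) : Prop where
  mul_self : ∀ i, i < N → p i * p i = 1
  comm : ∀ i j, i + 2 ≤ j → j < N → p i * p j = p j * p i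
  braid : ∀ i, i + 1 < N → p i * p (i + 1) * p i = p (i + 1) * p i * p (i + 1)

namespace IsCoxeterFamily

variable {p : ℕ → G} {N : ℕ}

theorem descProd_mul_of_lt (hp : IsCoxeterFamily p N) {i k l : ℕ} (hik : i + 1 < k)
    (hl : k + l ≤ N) : descProd p k l * p i = p i * descProd p k l := by
  induction l with
  | zero => simp [descProd]
  | succ l ih =>
    rw [descProd, mul_assoc, ih (by omega), ← mul_assoc, ← mul_assoc,
      hp.comm i (k + l) (by omega) (by omega)]

theorem descProd_mul_of_add_lt (hp : IsCoxeterFamily p N) {j k l : ℕ} (hj : k + l < j)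
    (hjN : j < N) : descProd p k l * p j = p j * descProd p k l := by
  induction l with
  | zero => simp [descProd]
  | succ l ih =>
    rw [descProd, mul_assoc, ih (by omega), ← mul_assoc, ← mul_assoc,
      hp.comm (k + l) j (by omega) hjN]

theorem descProd_mul_of_gt (hp : IsCoxeterFamily p N) {i k l : ℕ} (hki : k ≤ i)
    (hil : i + 1 < k + l) (hl : k + l ≤ N) :
    descProd p k l * p (i + 1) = p i * descProd p k l := by
  induction l with
  | zero => omega
  | succ l ih =>
    rcases Nat.lt_or_ge (i + 1) (k + l) with h | h
    · rw [descProd, mul_assoc, ih h (by omega), ← mul_assoc, ← mul_assoc,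
        hp.comm i (k + l) (by omega) (by omega)]
    · obtain ⟨l, rfl⟩ : ∃ l', l = l' + 1 := ⟨l - 1, by omega⟩
      obtain rfl : i = k + l := by omega
      rw [descProd, descProd, ← add_assoc, mul_assoc, mul_assoc,
        hp.descProd_mul_of_add_lt (by omega) (by omega), ← mul_assoc, ← mul_assoc, ← hp.braid (k + l) (by omega)]
      simp only [mul_assoc]

/-- Coset decomposition of the subgroup generated by `p 0, …, p m` with respect to the one
generated by `p 0, …, p (m - 1)`. -/
theorem exists_eq_mul_descProd (hp : IsCoxeterFamily p N) {m : ℕ} (hm : m + 1 ≤ N) {x : G}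
    (hx : x ∈ Subgroup.closure (p '' Set.Iio (m + 1))) :
    ∃ h ∈ Subgroup.closure (p '' Set.Iio m), ∃ k l, k + l = m + 1 ∧ x = h * descProd p k l := by
  have mul_mem : ∀ x : G, (∃ h ∈ Subgroup.closure (p '' Set.Iio m), ∃ k l, k + l = m + 1 ∧
      x = h * descProd p k l) → ∀ i < m + 1, ∃ h ∈ Subgroup.closure (p '' Set.Iio m), ∃ k l,
      k + l = m + 1 ∧ x * p i = h * descProd p k l := by
    rintro x ⟨h, hh, k, l, hkl, rfl⟩ i hi
    have gen_mem : ∀ j < m, p j ∈ Subgroup.closure (p '' Set.Iio m) := fun j hj =>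
      Subgroup.subset_closure ⟨j, hj, rfl⟩
    rcases lt_trichotomy i k with hik | rfl | hik
    · rcases Nat.lt_or_ge (i + 1) k with h1 | h1
      · exact ⟨h * p i, mul_mem hh (gen_mem i (by omega)), k, l, hkl, by
          rw [mul_assoc, hp.descProd_mul_of_lt h1 (by omega), mul_assoc]⟩
      · obtain rfl : k = i + 1 := by omega
        exact ⟨h, hh, i, l + 1, by omega, by rw [mul_assoc, descProd_succ_right]⟩
    · obtain ⟨l, rfl⟩ : ∃ l', l = l' + 1 := ⟨l - 1, by omega⟩
      exact ⟨h, hh, i + 1, l, by omega, by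
        rw [descProd_succ_right, mul_assoc, mul_assoc, hp.mul_self i (by omega), mul_one]⟩
    · obtain ⟨i, rfl⟩ : ∃ i', i = i' + 1 := ⟨i - 1, by omega⟩
      exact ⟨h * p i, mul_mem hh (gen_mem i (by omega)), k, l, hkl, by
        rw [mul_assoc, hp.descProd_mul_of_gt (by omega) (by omega) (by omega), mul_assoc]⟩
  induction hx using Subgroup.closure_induction_right with
  | one => exact ⟨1, one_mem _, m + 1, 0, rfl, by simp [descProd]⟩
  | mul_right x _ y hy ih =>
    obtain ⟨i, hi, rfl⟩ := hy
    exact mul_mem x ih i hi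
  | mul_inv_cancel x _ y hy ih =>
    obtain ⟨i, hi, rfl⟩ := hy
    rw [inv_eq_of_mul_eq_one_left (hp.mul_self i (lt_of_lt_of_le hi hm))]
    exact mul_mem x ih i hi

variable {n : ℕ} {π : G →* Equiv.Perm (Fin n)}

theorem map_descProd_apply
    (hπ : ∀ i (hi : i + 1 < n), π (p i) = Equiv.swap ⟨i, Nat.lt_of_succ_lt hi⟩ ⟨i + 1, hi⟩)
    {k l : ℕ} (h : k + l < n) : π (descProd p k l) ⟨k, by omega⟩ = ⟨k + l, h⟩ := by
  induction l with
  | zero => simp [descProd]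
  | succ l ih =>
    rw [descProd, map_mul, Equiv.Perm.mul_apply, ih (by omega), hπ (k + l) (by omega),
      Equiv.swap_apply_left]
    rfl

theorem map_apply_of_mem_closure
    (hπ : ∀ i (hi : i + 1 < n), π (p i) = Equiv.swap ⟨i, Nat.lt_of_succ_lt hi⟩ ⟨i + 1, hi⟩)
    {m : ℕ} (hm : m + 1 < n) {x : G} (hx : x ∈ Subgroup.closure (p '' Set.Iio m)) :
    π x ⟨m + 1, hm⟩ = ⟨m + 1, hm⟩ := by
  have hle : Subgroup.closure (p '' Set.Iio m) ≤
      (MulAction.stabilizer (Equiv.Perm (Fin n)) (⟨m + 1, hm⟩ : Fin n)).comap π := by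
    rw [Subgroup.closure_le]
    rintro _ ⟨i, hi, rfl⟩
    have hi' : i < m := hi
    simp only [Subgroup.coe_comap, Set.mem_preimage, SetLike.mem_coe, MulAction.mem_stabilizer_iff,
      Equiv.Perm.smul_def]
    rw [hπ i (by omega), Equiv.swap_apply_of_ne_of_ne] <;> simp [Fin.ext_iff] <;> omega
  simpa [MulAction.mem_stabilizer_iff] using hle hx

theorem eq_one_of_map_eq_one (hp : IsCoxeterFamily p N) (hN : N < n)
    (hπ : ∀ i (hi : i + 1 < n), π (p i) = Equiv.swap ⟨i, Nat.lt_of_succ_lt hi⟩ ⟨i + 1, hi⟩)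
    {m : ℕ} (hm : m ≤ N) {x : G} (hx : x ∈ Subgroup.closure (p '' Set.Iio m)) (h1 : π x = 1) :
    x = 1 := by
  induction m generalizing x with
  | zero => simpa using hx
  | succ m ih =>
    obtain ⟨h, hh, k, l, hkl, rfl⟩ := hp.exists_eq_mul_descProd hm hx
    have hk := congrArg (fun σ : Equiv.Perm (Fin n) => σ ⟨k, by omega⟩) h1
    simp only [map_mul, Equiv.Perm.mul_apply, Equiv.Perm.one_apply] at hk
    rw [map_descProd_apply hπ (show k + l < n by omega)] at hk
    simp only [hkl] at hk
    rw [map_apply_of_mem_closure hπ (by omega) hh, Fin.mk.injEq] at hk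
    obtain rfl : l = 0 := by omega
    simp only [descProd, mul_one] at h1 ⊢
    exact ih (by omega) hh h1

end IsCoxeterFamily

theorem perm_hom_ext {M : Type*} [Monoid M] {n : ℕ} {Φ Ψ : Equiv.Perm (Fin n) →* M}
    (h : ∀ i (hi : i + 1 < n), Φ (Equiv.swap ⟨i, Nat.lt_of_succ_lt hi⟩ ⟨i + 1, hi⟩) =
      Ψ (Equiv.swap ⟨i, Nat.lt_of_succ_lt hi⟩ ⟨i + 1, hi⟩)) : Φ = Ψ := by
  cases n with
  | zero => exact MonoidHom.ext fun σ => by rw [Subsingleton.elim σ 1, map_one, map_one]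
  | succ n =>
    refine MonoidHom.eq_of_eqOn_denseM (Equiv.Perm.mclosure_swap_castSucc_succ n) ?_
    rintro _ ⟨i, rfl⟩
    exact h i (by omega)

theorem swap_mul_swap_comm_of_ne {α : Type*} [DecidableEq α] {a b c d : α} (hac : a ≠ c)
    (had : a ≠ d) (hbc : b ≠ c) (hbd : b ≠ d) :
    Equiv.swap a b * Equiv.swap c d = Equiv.swap c d * Equiv.swap a b := by
  refine (Equiv.Perm.Disjoint.commute fun x => ?_).eq
  by_cases hx : x = c ∨ x = d
  · left
    rcases hx with rfl | rfl
    · exact Equiv.swap_apply_of_ne_of_ne hac.symm hbc.symm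
    · exact Equiv.swap_apply_of_ne_of_ne had.symm hbd.symm
  · rw [not_or] at hx
    exact Or.inr (Equiv.swap_apply_of_ne_of_ne hx.1 hx.2)

theorem swap_braid {α : Type*} [DecidableEq α] {a b c : α} (hab : a ≠ b) (hac : a ≠ c)
    (hbc : b ≠ c) :
    Equiv.swap a b * Equiv.swap b c * Equiv.swap a b =
      Equiv.swap b c * Equiv.swap a b * Equiv.swap b c := by
  rw [Equiv.swap_mul_swap_mul_swap hab hac, Equiv.swap_comm a b, Equiv.swap_comm b c,
    Equiv.swap_mul_swap_mul_swap hbc.symm hac.symm, Equiv.swap_comm]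

theorem swap_isCoxeterFamily (n : ℕ) :
    IsCoxeterFamily (fun i => if hi : i + 1 < n then
      Equiv.swap (⟨i, Nat.lt_of_succ_lt hi⟩ : Fin n) ⟨i + 1, hi⟩ else 1) (n - 1) where
  mul_self i hi := by
    rw [dif_pos (by omega), Equiv.swap_mul_self]
  comm i j hij hj := by
    rw [dif_pos (by omega), dif_pos (by omega)]
    apply swap_mul_swap_comm_of_ne <;> simp only [ne_eq, Fin.mk.injEq] <;> omega
  braid i hi := by
    rw [dif_pos (by omega), dif_pos (by omega)]
    apply swap_braid <;> simp only [ne_eq, Fin.mk.injEq] <;> omega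

/-- Elements satisfying the Coxeter relations of type `A` define a homomorphism from the
symmetric group. -/
theorem IsCoxeterFamily.exists_hom {d : ℕ → G} {n : ℕ} (hd : IsCoxeterFamily d (n - 1))
    (hn : 1 ≤ n) : ∃ Φ : Equiv.Perm (Fin n) →* G, ∀ i (hi : i + 1 < n),
      Φ (Equiv.swap ⟨i, Nat.lt_of_succ_lt hi⟩ ⟨i + 1, hi⟩) = d i := by
  set q : ℕ → Equiv.Perm (Fin n) := fun i => if hi : i + 1 < n then
      Equiv.swap (⟨i, Nat.lt_of_succ_lt hi⟩ : Fin n) ⟨i + 1, hi⟩ else 1 with hq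
  have hqc : IsCoxeterFamily q (n - 1) := swap_isCoxeterFamily n
  set p : ℕ → G × Equiv.Perm (Fin n) := fun i => (d i, q i)
  have hp : IsCoxeterFamily p (n - 1) :=
    { mul_self := fun i hi => Prod.ext (hd.mul_self i hi) (hqc.mul_self i hi)
      comm := fun i j hij hj => Prod.ext (hd.comm i j hij hj) (hqc.comm i j hij hj)
      braid := fun i hi => Prod.ext (hd.braid i hi) (hqc.braid i hi) }
  set H := Subgroup.closure (p '' Set.Iio (n - 1))
  have hπ : ∀ i (hi : i + 1 < n), MonoidHom.snd G (Equiv.Perm (Fin n)) (p i) =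
      Equiv.swap ⟨i, Nat.lt_of_succ_lt hi⟩ ⟨i + 1, hi⟩ := fun i hi => dif_pos hi
  let π : H →* Equiv.Perm (Fin n) := (MonoidHom.snd G (Equiv.Perm (Fin n))).comp H.subtype
  have mem : ∀ i, i + 1 < n → p i ∈ H := fun i hi =>
    Subgroup.subset_closure ⟨i, Nat.lt_sub_of_add_lt hi, rfl⟩
  have hinj : Function.Injective π := by
    rw [injective_iff_map_eq_one]
    exact fun x hx => Subtype.ext (hp.eq_one_of_map_eq_one (by omega) hπ le_rfl x.2 hx)
  have hsurj : Function.Surjective π := by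
    rw [← MonoidHom.mrange_eq_top, eq_top_iff]
    obtain ⟨n, rfl⟩ : ∃ n', n = n' + 1 := ⟨n - 1, by omega⟩
    rw [← Equiv.Perm.mclosure_swap_castSucc_succ n, Submonoid.closure_le]
    rintro _ ⟨i, rfl⟩
    exact ⟨⟨p i, mem i (by omega)⟩, hπ i (by omega)⟩
  let e := MulEquiv.ofBijective π ⟨hinj, hsurj⟩
  refine ⟨((MonoidHom.fst G _).comp H.subtype).comp e.symm.toMonoidHom, fun i hi => ?_⟩
  have he : e.symm (Equiv.swap ⟨i, Nat.lt_of_succ_lt hi⟩ ⟨i + 1, hi⟩) = ⟨p i, mem i hi⟩ := by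
    rw [MulEquiv.symm_apply_eq]
    exact (hπ i hi).symm
  simp [he, p]

end BraidWords

section Operators

variable {𝕜 K : Type*} [Field 𝕜] [Field K] [Algebra 𝕜 K]

theorem demazureMinusAux_apply (s : K ≃ₐ[𝕜] K) (c f : K) :
    demazureMinusAux 𝕜 K s c f = s f - (f - s f) * c⁻¹ := by
  simp [demazureMinusAux]

theorem demazureMinusAux_mul_self {s : K ≃ₐ[𝕜] K} {x y : K} (hxy : x ≠ y) (hs : s * s = 1)
    (hx : s x = y) (hy : s y = x) :
    demazureMinusAux 𝕜 K s (y - x) * demazureMinusAux 𝕜 K s (y - x) = 1 := by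
  have hss : ∀ f, s (s f) = f := fun f => DFunLike.congr_fun hs f
  have h1 : y - x ≠ 0 := sub_ne_zero.2 hxy.symm
  have h2 : x - y ≠ 0 := sub_ne_zero.2 hxy
  ext f
  simp only [Module.End.mul_apply, demazureMinusAux_apply, map_sub, map_mul, map_inv₀, hss, hx, hy,
    Module.End.one_apply]
  rw [← neg_sub y x, inv_neg]
  field_simp
  ring

theorem demazureMinusAux_comm {s t : K ≃ₐ[𝕜] K} {c d : K} (hst : s * t = t * s)
    (hd : s d = d) (hc : t c = c) :
    demazureMinusAux 𝕜 K s c * demazureMinusAux 𝕜 K t d =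
      demazureMinusAux 𝕜 K t d * demazureMinusAux 𝕜 K s c := by
  have hst' : ∀ f, s (t f) = t (s f) := fun f => DFunLike.congr_fun hst f
  ext f
  simp only [Module.End.mul_apply, demazureMinusAux_apply, map_sub, map_mul, map_inv₀, hst', hd, hc]
  ring

theorem demazureMinusAux_braid {s t : K ≃ₐ[𝕜] K} {x y z : K} (hxy : x ≠ y) (hyz : y ≠ z)
    (hxz : x ≠ z) (hs : s * s = 1) (ht : t * t = 1) (hst : s * t * s = t * s * t)
    (hsx : s x = y) (hsy : s y = x) (hsz : s z = z)
    (htx : t x = x) (hty : t y = z) (htz : t z = y) :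
    demazureMinusAux 𝕜 K s (y - x) * demazureMinusAux 𝕜 K t (z - y) *
        demazureMinusAux 𝕜 K s (y - x) =
      demazureMinusAux 𝕜 K t (z - y) * demazureMinusAux 𝕜 K s (y - x) *
        demazureMinusAux 𝕜 K t (z - y) := by
  have hss : ∀ f, s (s f) = f := fun f => DFunLike.congr_fun hs f
  have htt : ∀ f, t (t f) = f := fun f => DFunLike.congr_fun ht f
  have hsts : ∀ f, s (t (s f)) = t (s (t f)) := fun f => DFunLike.congr_fun hst f
  have h1 : y - x ≠ 0 := sub_ne_zero.2 hxy.symm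
  have h2 : z - y ≠ 0 := sub_ne_zero.2 hyz.symm
  have h3 : z - x ≠ 0 := sub_ne_zero.2 hxz.symm
  ext f
  simp only [Module.End.mul_apply, demazureMinusAux_apply, map_sub, map_mul, map_inv₀, hss, htt,
    hsts, hsx, hsy, hsz, htx, hty, htz]
  rw [← neg_sub y x, ← neg_sub z y, inv_neg, inv_neg]
  generalize t (s (t f)) = f₁
  generalize t (s f) = f₂
  generalize s (t f) = f₃
  generalize s f = f₄
  generalize t f = f₅
  field_simp
  ring

end Operators

section PermutationAction

variable {𝕜 : Type*} [Field 𝕜] {n : ℕ} {K : Type*} [Field K]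
  [Algebra (MvPolynomial (Fin n) 𝕜) K] [IsFractionRing (MvPolynomial (Fin n) 𝕜) K]

theorem ratVar_injective : Function.Injective (ratVar 𝕜 n K) :=
  (IsFractionRing.injective (MvPolynomial (Fin n) 𝕜) K).comp MvPolynomial.X_injective

variable [Algebra 𝕜 K] [IsScalarTower 𝕜 (MvPolynomial (Fin n) 𝕜) K]

theorem algEquiv_ext_ratVar {g h : K ≃ₐ[𝕜] K}
    (hgh : ∀ i, g (ratVar 𝕜 n K i) = h (ratVar 𝕜 n K i)) : g = h := by
  have hpoly : g.toAlgHom.comp (IsScalarTower.toAlgHom 𝕜 (MvPolynomial (Fin n) 𝕜) K) =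
      h.toAlgHom.comp (IsScalarTower.toAlgHom 𝕜 (MvPolynomial (Fin n) 𝕜) K) :=
    MvPolynomial.algHom_ext fun i => hgh i
  have hring : (g : K →+* K) = (h : K →+* K) :=
    IsLocalization.ringHom_ext (nonZeroDivisors (MvPolynomial (Fin n) 𝕜))
      (RingHom.ext fun q => DFunLike.congr_fun hpoly q)
  exact AlgEquiv.ext fun f => DFunLike.congr_fun hring f

/-- An assignment of automorphisms permuting the variables is multiplicative. -/
theorem permAction_mul {s : Equiv.Perm (Fin n) → (K ≃ₐ[𝕜] K)}
    (hs : ∀ σ i, s σ (ratVar 𝕜 n K i) = ratVar 𝕜 n K (σ i)) (σ τ : Equiv.Perm (Fin n)) :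
    s (σ * τ) = s σ * s τ :=
  algEquiv_ext_ratVar (n := n) fun i => by simp [hs]

theorem permAction_one {s : Equiv.Perm (Fin n) → (K ≃ₐ[𝕜] K)}
    (hs : ∀ σ i, s σ (ratVar 𝕜 n K i) = ratVar 𝕜 n K (σ i)) : s 1 = 1 :=
  algEquiv_ext_ratVar (n := n) fun i => by simp [hs]

end PermutationAction

/-- The operators `D₁⁻, …, D_{n−1}⁻` on `K = 𝕜(x₁,…,xₙ)` satisfy the
Coxeter relations of the symmetric group `Sₙ`, and consequently there is a unique action
of `Sₙ` on `K` by `𝕜`-linear maps in which the simple transposition `(i, i+1)` acts as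
`Dᵢ⁻` (the `⊖`-action).  Here `s` is the permutation action of `Sₙ` on `K` (characterized
by `hs`), from which the `Dᵢ⁻` are built. -/
theorem DMinus_coxeter_relations_and_unique_action
    (𝕜 : Type*) [Field 𝕜] [CharZero 𝕜] (n : ℕ) (hn : 1 ≤ n)
    (K : Type*) [Field K] [Algebra 𝕜 K] [Algebra (MvPolynomial (Fin n) 𝕜) K]
    [IsScalarTower 𝕜 (MvPolynomial (Fin n) 𝕜) K]
    [IsFractionRing (MvPolynomial (Fin n) 𝕜) K]
    (s : Equiv.Perm (Fin n) → (K ≃ₐ[𝕜] K))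
    (hs : ∀ (σ : Equiv.Perm (Fin n)) (i : Fin n), s σ (ratVar 𝕜 n K i) = ratVar 𝕜 n K (σ i)) :
    (∀ (i : ℕ) (hi : i + 1 < n), DMinus 𝕜 K s i hi * DMinus 𝕜 K s i hi = 1) ∧
    (∀ (i j : ℕ) (hi : i + 1 < n) (hj : j + 1 < n), i + 2 ≤ j ∨ j + 2 ≤ i →
      DMinus 𝕜 K s i hi * DMinus 𝕜 K s j hj = DMinus 𝕜 K s j hj * DMinus 𝕜 K s i hi) ∧
    (∀ (i : ℕ) (hi : i + 2 < n),
      DMinus 𝕜 K s i (by omega) * DMinus 𝕜 K s (i + 1) hi * DMinus 𝕜 K s i (by omega) =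
        DMinus 𝕜 K s (i + 1) hi * DMinus 𝕜 K s i (by omega) * DMinus 𝕜 K s (i + 1) hi) ∧
    (∃! Φ : Equiv.Perm (Fin n) →* Module.End 𝕜 K,
      ∀ (i : ℕ) (hi : i + 1 < n),
        Φ (Equiv.swap ⟨i, Nat.lt_of_succ_lt hi⟩ ⟨i + 1, hi⟩) = DMinus 𝕜 K s i hi) := by
  have hinj : Function.Injective (ratVar 𝕜 n K) := ratVar_injective
  have swap_sq : ∀ a b : Fin n, s (Equiv.swap a b) * s (Equiv.swap a b) = 1 := fun a b => by
    rw [← permAction_mul hs, Equiv.swap_mul_self, permAction_one hs]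
  have hsq : ∀ (i : ℕ) (hi : i + 1 < n), DMinus 𝕜 K s i hi * DMinus 𝕜 K s i hi = 1 := by
    intro i hi
    refine demazureMinusAux_mul_self (hinj.ne ?_) (swap_sq _ _) ?_ ?_
    · simp
    · rw [hs, Equiv.swap_apply_left]
    · rw [hs, Equiv.swap_apply_right]
  have hcomm : ∀ (i j : ℕ) (hi : i + 1 < n) (hj : j + 1 < n), i + 2 ≤ j ∨ j + 2 ≤ i →
      DMinus 𝕜 K s i hi * DMinus 𝕜 K s j hj = DMinus 𝕜 K s j hj * DMinus 𝕜 K s i hi := by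
    intro i j hi hj hij
    refine demazureMinusAux_comm ?_ ?_ ?_
    · rw [← permAction_mul hs, ← permAction_mul hs, swap_mul_swap_comm_of_ne] <;>
        simp only [ne_eq, Fin.mk.injEq] <;> omega
    all_goals
      rw [map_sub, hs, hs, Equiv.swap_apply_of_ne_of_ne, Equiv.swap_apply_of_ne_of_ne] <;>
        simp only [ne_eq, Fin.mk.injEq] <;> omega
  have hbraid : ∀ (i : ℕ) (hi : i + 2 < n),
      DMinus 𝕜 K s i (by omega) * DMinus 𝕜 K s (i + 1) hi * DMinus 𝕜 K s i (by omega) =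
        DMinus 𝕜 K s (i + 1) hi * DMinus 𝕜 K s i (by omega) * DMinus 𝕜 K s (i + 1) hi := by
    intro i hi
    have hab : (⟨i, by omega⟩ : Fin n) ≠ ⟨i + 1, by omega⟩ := by simp
    have hac : (⟨i, by omega⟩ : Fin n) ≠ ⟨i + 1 + 1, hi⟩ := by
      simp only [ne_eq, Fin.mk.injEq]; omega
    have hbc : (⟨i + 1, by omega⟩ : Fin n) ≠ ⟨i + 1 + 1, hi⟩ := by simp
    refine demazureMinusAux_braid (hinj.ne hab) (hinj.ne hbc) (hinj.ne hac) (swap_sq _ _)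
      (swap_sq _ _) ?_ ?_ ?_ ?_ ?_ ?_ ?_
    · simp only [← permAction_mul hs, swap_braid hab hac hbc]
    · rw [hs, Equiv.swap_apply_left]
    · rw [hs, Equiv.swap_apply_right]
    · rw [hs, Equiv.swap_apply_of_ne_of_ne hac.symm hbc.symm]
    · rw [hs, Equiv.swap_apply_of_ne_of_ne hab hac]
    · rw [hs, Equiv.swap_apply_left]
    · rw [hs, Equiv.swap_apply_right]
  refine ⟨hsq, hcomm, hbraid, ?_⟩
  let d : ℕ → (Module.End 𝕜 K)ˣ := fun i =>
    if hi : i + 1 < n then ⟨DMinus 𝕜 K s i hi, DMinus 𝕜 K s i hi, hsq i hi, hsq i hi⟩ else 1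
  have hd : ∀ i (hi : i + 1 < n), (d i : Module.End 𝕜 K) = DMinus 𝕜 K s i hi := fun i hi => by
    simp only [d, dif_pos hi]
  have hcox : IsCoxeterFamily d (n - 1) :=
    { mul_self := fun i hi => Units.ext <| by
        rw [Units.val_mul, Units.val_one, hd i (by omega), hsq]
      comm := fun i j hij hj => Units.ext <| by
        rw [Units.val_mul, Units.val_mul, hd i (by omega), hd j (by omega),
          hcomm i j _ _ (Or.inl hij)]
      braid := fun i hi => Units.ext <| by
        simp only [Units.val_mul]
        rw [hd i (by omega), hd (i + 1) (by omega), hbraid i (by omega)] }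
  obtain ⟨Φ, hΦ⟩ := hcox.exists_hom hn
  have hval : ∀ (i : ℕ) (hi : i + 1 < n), (Units.coeHom (Module.End 𝕜 K)).comp Φ
      (Equiv.swap ⟨i, Nat.lt_of_succ_lt hi⟩ ⟨i + 1, hi⟩) = DMinus 𝕜 K s i hi := fun i hi => by
    rw [MonoidHom.comp_apply, hΦ i hi, Units.coeHom_apply, hd i hi]
  exact ⟨_, hval, fun Ψ hΨ => perm_hom_ext fun i hi => (hΨ i hi).trans (hval i hi).symm⟩
end
end

section
/- Fix integers 0 ≤ r ≤ n. Let Ψ : Sₙ → End_𝕜(K) be any monoid homomorphism (with End_𝕜(K) under composition) such that Ψ sends the transposition (i, i+1) to Dᵢ⁻ for every 1 ≤ i ≤ n−1. For μ ∈ P_{r,n}, 1 ≤ i ≤ r and 1 ≤ j ≤ n−r, set ε_{i,j}(μ) = 1 if j ≤ μᵢ and ε_{i,j}(μ) = −1 otherwise, and set y_{i,j} = (x_{r+1−i} − x_{r+j})^{−1} ∈ K. Then ∑_{π ∈ S_r×S_{n−r}} Ψ(π)( ∑_{μ ∈ P_{r,n}} ∏_{i=1}^{r} ∏_{j=1}^{n−r}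 (1 − ε_{i,j}(μ)·y_{i,j}) ) = n! (as an element of K), where S_r×S_{n−r} denotes the Young subgroup of Sₙ consisting of all permutations that preserve both {1,…,r} and {r+1,…,n}. -/
noncomputable section

open MvPolynomial

section Helpers

open Finset

/-- Sum over `k` of `∏_{j ≠ k} (1 + 1/(z_j - z_k))`. -/
lemma sum_prod_one_add_inv_sub {K ι : Type*} [Field K] [Fintype ι] [DecidableEq ι]
    (z : ι → K) (hz : Function.Injective z) :
    ∑ k, ∏ j ∈ univ.erase k, (1 + (z j - z k)⁻¹) = (Fintype.card ι : K) := by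
  classical
  rcases isEmpty_or_nonempty ι with h | h
  · simp
  let p : Polynomial K := ∏ j, (Polynomial.X - Polynomial.C (z j))
  let q : Polynomial K := ∏ j, (Polynomial.X - Polynomial.C (z j + 1))
  have hp : p.Monic := Polynomial.monic_prod_X_sub_C _ _
  have hq : q.Monic := Polynomial.monic_prod_X_sub_C _ _
  have hpd : p.degree = (#(univ : Finset ι) : ℕ) := by
    simp [p, Polynomial.degree_prod]
  have hqd : q.degree = (#(univ : Finset ι) : ℕ) := by
    simp only [q, Polynomial.degree_prod, Polynomial.degree_X_sub_C]
    simp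
  have hlt : (p - q).degree < #(univ : Finset ι) := by
    rw [← hpd]
    exact Polynomial.degree_sub_lt_left (hpd.trans hqd.symm) hp.ne_zero
      (by rw [hp.leadingCoeff, hq.leadingCoeff])
  have key := Lagrange.coeff_eq_sum (s := univ) (v := z) hz.injOn hlt
  have hpos : 0 < #(univ : Finset ι) := by simpa using Fintype.card_pos
  rw [Polynomial.coeff_sub, Polynomial.prod_X_sub_C_coeff_card_pred _ _ hpos,
    Polynomial.prod_X_sub_C_coeff_card_pred _ _ hpos] at key
  have hcard : (Fintype.card ι : K) = -∑ i, z i - -∑ i, (z i + 1) := by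
    simp [sum_add_distrib]
  rw [hcard, key]
  refine sum_congr rfl fun k _ => ?_
  have hpk : p.eval (z k) = 0 := by
    simp only [p, Polynomial.eval_prod]
    exact prod_eq_zero (mem_univ k) (by simp)
  have hqk : q.eval (z k) = -∏ j ∈ univ.erase k, (z k - z j - 1) := by
    simp only [q, Polynomial.eval_prod]
    rw [← mul_prod_erase univ _ (mem_univ k)]
    simp [sub_sub]
  rw [Polynomial.eval_sub, hpk, hqk, zero_sub, neg_neg, ← prod_div_distrib]
  refine prod_congr rfl fun j hj => ?_
  have hne : z j - z k ≠ 0 := sub_ne_zero.2 (hz.ne (ne_of_mem_erase hj))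
  have hne' : z k - z j ≠ 0 := sub_ne_zero.2 (hz.ne (ne_of_mem_erase hj).symm)
  field_simp
  ring

/-- The product of `1 + 1/(y_j - y_i)` over all pairs `i < j`. -/
def pairProd {K : Type*} [Field K] {k : ℕ} (y : Fin k → K) : K :=
  ∏ i, ∏ j ∈ Ioi i, (1 + (y j - y i)⁻¹)

lemma pairProd_succ {K : Type*} [Field K] {k : ℕ} (y : Fin (k + 1) → K) :
    pairProd y = (∏ j : Fin k, (1 + (y j.succ - y 0)⁻¹)) * pairProd (Fin.tail y) := by
  simp only [pairProd, Fin.prod_univ_succ, Fin.prod_Ioi_zero, Fin.prod_Ioi_succ, Fin.tail]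

/-- Splitting a permutation sum by the image of `0`. -/
lemma sum_perm_comp_succ {K R : Type*} [AddCommMonoid R] {k : ℕ} (y : Fin (k + 1) → K)
    (g : (Fin (k + 1) → K) → R) :
    ∑ σ : Equiv.Perm (Fin (k + 1)), g (y ∘ σ) =
      ∑ p, ∑ e : Equiv.Perm (Fin k),
        g (Fin.cons (y p) ((fun i => y (Equiv.swap 0 p i.succ)) ∘ e)) := by
  rw [← Equiv.sum_comp Equiv.Perm.decomposeFin.symm, Fintype.sum_prod_type]
  refine sum_congr rfl fun p _ => sum_congr rfl fun e _ => congrArg g ?_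
  funext i
  refine Fin.cases ?_ (fun i => ?_) i <;> simp

lemma prod_swap_zero_succ {R : Type*} [CommMonoid R] {k : ℕ} (p : Fin (k + 1))
    (f : Fin (k + 1) → R) :
    ∏ i : Fin k, f (Equiv.swap 0 p i.succ) = ∏ j ∈ univ.erase p, f j := by
  have h : (univ.erase p : Finset (Fin (k + 1))) =
      univ.map ((Fin.succEmb k).trans (Equiv.swap 0 p).toEmbedding) := by
    ext j
    simp only [mem_erase, mem_univ, and_true, mem_map, true_and, Function.Embedding.trans_apply,
      Fin.coe_succEmb, Equiv.toEmbedding_apply]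
    constructor
    · intro hj
      obtain ⟨i, hi⟩ := Fin.exists_succ_eq.2 (show Equiv.swap 0 p j ≠ 0 by
        intro h
        apply hj
        rw [← Equiv.swap_apply_self 0 p j, h, Equiv.swap_apply_left])
      exact ⟨i, by rw [hi, Equiv.swap_apply_self]⟩
    · rintro ⟨i, rfl⟩ h
      have := congrArg (Equiv.swap 0 p) h
      simp at this
  rw [h, prod_map]
  simp

lemma sum_pairProd_comp_perm {K : Type*} [Field K] (k : ℕ) (y : Fin k → K)
    (hy : Function.Injective y) :
    ∑ σ : Equiv.Perm (Fin k), pairProd (y ∘ σ) = (k.factorial : K) := by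
  induction k with
  | zero => simp [pairProd]
  | succ k ih =>
    rw [sum_perm_comp_succ y pairProd]
    have hstep : ∀ p, ∑ e : Equiv.Perm (Fin k),
        pairProd (Fin.cons (y p) ((fun i => y (Equiv.swap 0 p i.succ)) ∘ e)) =
        (∏ j ∈ univ.erase p, (1 + (y j - y p)⁻¹)) * (k.factorial : K) := by
      intro p
      rw [← ih (fun i => y (Equiv.swap 0 p i.succ))
        (hy.comp ((Equiv.swap 0 p).injective.comp (Fin.succ_injective k))), mul_sum]
      refine sum_congr rfl fun e _ => ?_
      rw [pairProd_succ, Fin.tail_cons]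
      congr 1
      simp only [Fin.cons_succ, Fin.cons_zero, Function.comp]
      rw [Equiv.prod_comp e (fun i => (1 + (y (Equiv.swap 0 p i.succ) - y p)⁻¹))]
      exact prod_swap_zero_succ p (fun j => 1 + (y j - y p)⁻¹)
    simp only [hstep]
    rw [← sum_mul, sum_prod_one_add_inv_sub y hy, Nat.factorial_succ]
    simp

/-- The sum over partitions in an `r × m` box, both variable families being listed in
decreasing order of their position in the associated shuffle. -/
def boxSum {K : Type*} [Field K] {r m : ℕ} (a : Fin r → K) (b : Fin m → K) : K :=
  ∑ mu ∈ univ.filter (fun mu : Fin r → Fin (m + 1) =>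
      ∀ i j : Fin r, i ≤ j → (mu j : ℕ) ≤ (mu i : ℕ)),
    ∏ i : Fin r, ∏ j : Fin m,
      (1 - (if m ≤ (j : ℕ) + (mu i : ℕ) then (1 : K) else -1) * (a i - b j)⁻¹)

lemma boxSum_zero_left {K : Type*} [Field K] {m : ℕ} (a : Fin 0 → K) (b : Fin m → K) :
    boxSum a b = 1 := by
  simp [boxSum]

lemma boxSum_zero_right {K : Type*} [Field K] {r : ℕ} (a : Fin r → K) (b : Fin 0 → K) :
    boxSum a b = 1 := by
  simp only [boxSum, univ_eq_empty, prod_empty, prod_const_one]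
  rw [filter_true_of_mem (fun mu _ i j _ => by omega)]
  simp

lemma boxSum_succ {K : Type*} [Field K] {r m : ℕ} (a : Fin (r + 1) → K) (b : Fin (m + 1) → K) :
    boxSum a b = (∏ j, (1 + (b j - a 0)⁻¹)) * boxSum (Fin.tail a) b +
      (∏ i, (1 + (a i - b 0)⁻¹)) * boxSum a (Fin.tail b) := by
  rw [boxSum, ← sum_filter_add_sum_filter_not _ (fun mu => mu 0 = Fin.last (m + 1))]
  congr 1
  · rw [boxSum, mul_sum, filter_filter]
    refine sum_nbij' (fun mu => Fin.tail mu) (fun mu => Fin.cons (Fin.last _) mu) ?_ ?_ ?_ ?_ ?_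
    · intro mu h
      simp only [mem_filter, mem_univ, true_and] at h ⊢
      exact fun i j hij => h.1 i.succ j.succ (Fin.succ_le_succ_iff.2 hij)
    · intro mu h
      simp only [mem_filter, mem_univ, true_and, Fin.cons_zero, and_true] at h ⊢
      intro i j
      refine Fin.cases ?_ (fun i => ?_) i <;> refine Fin.cases ?_ (fun j => ?_) j
      · simp
      · intro _
        simp only [Fin.cons_succ, Fin.cons_zero, Fin.val_last]
        omega
      · simp
      · simpa using h i j
    · intro mu h
      simp only [mem_filter, mem_univ, true_and] at h
      rw [← h.2, Fin.cons_self_tail]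
    · intro mu _
      simp
    · intro mu h
      simp only [mem_filter, mem_univ, true_and] at h
      rw [Fin.prod_univ_succ]
      congr 1
      refine prod_congr rfl fun j _ => ?_
      rw [h.2, if_pos (by simp), ← neg_sub (b j) (a 0), inv_neg]
      ring
  · rw [boxSum, mul_sum, filter_filter]
    symm
    refine sum_bij (fun mu _ => fun i => (mu i).castSucc) ?_ ?_ ?_ ?_
    · intro mu h
      simp only [mem_filter, mem_univ, true_and] at h ⊢
      exact ⟨fun i j hij => h i j hij, (Fin.castSucc_lt_last _).ne⟩
    · intro mu _ nu _ h
      funext i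
      exact Fin.castSucc_injective _ (congrFun h i)
    · intro mu h
      simp only [mem_filter, mem_univ, true_and] at h
      have hlt : ∀ i, (mu i : ℕ) < m + 1 := by
        intro i
        have h0 := h.1 0 i (Fin.zero_le _)
        have h1 := Fin.val_lt_last h.2
        omega
      refine ⟨fun i => ⟨mu i, hlt i⟩, ?_, ?_⟩
      · simp only [mem_filter, mem_univ, true_and]
        exact fun i j hij => h.1 i j hij
      · rfl
    · intro mu _
      rw [← prod_mul_distrib]
      refine prod_congr rfl fun i _ => ?_
      rw [Fin.prod_univ_succ]
      congr 1
      · have := (mu i).isLt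
        rw [if_neg (by simp only [Fin.val_zero, Fin.val_castSucc]; omega)]
        ring
      · refine prod_congr rfl fun j _ => ?_
        simp only [Fin.tail, Fin.val_succ, Fin.val_castSucc]
        congr 3
        simp only [eq_iff_iff]
        omega

lemma prod_erase_inl {ι κ R : Type*} [Fintype ι] [Fintype κ] [DecidableEq ι] [DecidableEq κ]
    [CommMonoid R] (p : ι) (f : ι ⊕ κ → R) :
    ∏ z ∈ univ.erase (Sum.inl p), f z =
      (∏ i ∈ univ.erase p, f (Sum.inl i)) * ∏ j, f (Sum.inr j) := by
  rw [show (univ.erase (Sum.inl p) : Finset (ι ⊕ κ)) = (univ.erase p).disjSum univ by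
    ext z; rcases z with z | z <;> simp, prod_disjSum]

lemma prod_erase_inr {ι κ R : Type*} [Fintype ι] [Fintype κ] [DecidableEq ι] [DecidableEq κ]
    [CommMonoid R] (p : κ) (f : ι ⊕ κ → R) :
    ∏ z ∈ univ.erase (Sum.inr p), f z =
      (∏ i, f (Sum.inl i)) * ∏ j ∈ univ.erase p, f (Sum.inr j) := by
  rw [show (univ.erase (Sum.inr p) : Finset (ι ⊕ κ)) = univ.disjSum (univ.erase p) by
    ext z; rcases z with z | z <;> simp, prod_disjSum]

/-- Symmetrizing `boxSum`, weighted by `pairProd` in both families, gives `(r + m)!`. -/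
lemma sum_boxSum_comp_perm {K : Type*} [Field K] (r m : ℕ) (a : Fin r → K) (b : Fin m → K)
    (hab : Function.Injective (Sum.elim a b)) :
    ∑ σ : Equiv.Perm (Fin r), ∑ τ : Equiv.Perm (Fin m),
      boxSum (a ∘ σ) (b ∘ τ) * (pairProd (a ∘ σ) * pairProd (b ∘ τ)) =
        ((r + m).factorial : K) := by
  induction r generalizing m with
  | zero =>
    simp only [boxSum_zero_left, one_mul]
    rw [← sum_mul_sum, sum_pairProd_comp_perm _ a (hab.comp Sum.inl_injective),
      sum_pairProd_comp_perm _ b (hab.comp Sum.inr_injective)]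
    simp
  | succ r ihr =>
    induction m with
    | zero =>
      simp only [boxSum_zero_right, one_mul]
      rw [← sum_mul_sum, sum_pairProd_comp_perm _ a (hab.comp Sum.inl_injective),
        sum_pairProd_comp_perm _ b (hab.comp Sum.inr_injective)]
      simp
    | succ m ihm =>
      have ha : ∑ σ : Equiv.Perm (Fin (r + 1)), ∑ τ : Equiv.Perm (Fin (m + 1)),
          (∏ j, (1 + ((b ∘ τ) j - (a ∘ σ) 0)⁻¹)) * boxSum (Fin.tail (a ∘ σ)) (b ∘ τ) *
            (pairProd (a ∘ σ) * pairProd (b ∘ τ)) =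
          ∑ p, (∏ z ∈ univ.erase (Sum.inl p),
            (1 + (Sum.elim a b z - Sum.elim a b (Sum.inl p))⁻¹)) *
              ((r + (m + 1)).factorial : K) := by
        rw [sum_perm_comp_succ a (fun y => ∑ τ : Equiv.Perm (Fin (m + 1)),
          (∏ j, (1 + ((b ∘ τ) j - y 0)⁻¹)) * boxSum (Fin.tail y) (b ∘ τ) *
            (pairProd y * pairProd (b ∘ τ)))]
        refine sum_congr rfl fun p _ => ?_
        rw [← ihr (m + 1) (fun i => a (Equiv.swap 0 p i.succ)) b, mul_sum]
        · refine sum_congr rfl fun e _ => ?_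
          rw [mul_sum]
          refine sum_congr rfl fun τ _ => ?_
          rw [pairProd_succ, Fin.tail_cons, prod_erase_inl]
          simp only [Fin.cons_succ, Fin.cons_zero, Function.comp_apply, Sum.elim_inl,
            Sum.elim_inr]
          rw [Equiv.prod_comp e (fun i => (1 + (a (Equiv.swap 0 p i.succ) - a p)⁻¹)),
            Equiv.prod_comp τ (fun j => (1 + (b j - a p)⁻¹)),
            prod_swap_zero_succ p (fun j => 1 + (a j - a p)⁻¹)]
          ring
        · have hinj := hab.comp (((Equiv.swap 0 p).injective.comp
            (Fin.succ_injective r)).sumMap Function.injective_id)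
          convert hinj using 1
          funext z
          rcases z with z | z <;> rfl
      have hb : ∑ σ : Equiv.Perm (Fin (r + 1)), ∑ τ : Equiv.Perm (Fin (m + 1)),
          (∏ i, (1 + ((a ∘ σ) i - (b ∘ τ) 0)⁻¹)) * boxSum (a ∘ σ) (Fin.tail (b ∘ τ)) *
            (pairProd (a ∘ σ) * pairProd (b ∘ τ)) =
          ∑ p, (∏ z ∈ univ.erase (Sum.inr p),
            (1 + (Sum.elim a b z - Sum.elim a b (Sum.inr p))⁻¹)) *
              ((r + 1 + m).factorial : K) := by
        rw [sum_comm, sum_perm_comp_succ b (fun y => ∑ σ : Equiv.Perm (Fin (r + 1)),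
          (∏ i, (1 + ((a ∘ σ) i - y 0)⁻¹)) * boxSum (a ∘ σ) (Fin.tail y) *
            (pairProd (a ∘ σ) * pairProd y))]
        refine sum_congr rfl fun p _ => ?_
        rw [← ihm (fun i => b (Equiv.swap 0 p i.succ)), sum_comm, mul_sum]
        · refine sum_congr rfl fun σ _ => ?_
          rw [mul_sum]
          refine sum_congr rfl fun e _ => ?_
          rw [pairProd_succ (Fin.cons _ _), Fin.tail_cons, prod_erase_inr]
          simp only [Fin.cons_succ, Fin.cons_zero, Function.comp_apply, Sum.elim_inl,
            Sum.elim_inr]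
          rw [Equiv.prod_comp e (fun i => (1 + (b (Equiv.swap 0 p i.succ) - b p)⁻¹)),
            Equiv.prod_comp σ (fun j => (1 + (a j - b p)⁻¹)),
            prod_swap_zero_succ p (fun j => 1 + (b j - b p)⁻¹)]
          ring
        · have hinj := hab.comp (Function.injective_id.sumMap ((Equiv.swap 0 p).injective.comp
            (Fin.succ_injective m)))
          convert hinj using 1
          funext z
          rcases z with z | z <;> rfl
      have hz := sum_prod_one_add_inv_sub (Sum.elim a b) hab
      rw [Fintype.sum_sum_type] at hz
      simp only [boxSum_succ, add_mul, sum_add_distrib]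
      rw [ha, hb, show r + 1 + m = r + (m + 1) by omega, ← sum_mul, ← sum_mul, ← add_mul, hz,
        show r + 1 + (m + 1) = r + (m + 1) + 1 by omega, Nat.factorial_succ]
      simp only [Fintype.card_sum, Fintype.card_fin]
      push_cast
      ring

/-- An adjacent transposition changes `pairProd` in a single factor. -/
lemma pairProd_comp_swap {K : Type*} [Field K] {k : ℕ} (y : Fin k → K) (u v : Fin k)
    (huv : (v : ℕ) = u + 1) :
    pairProd (y ∘ Equiv.swap u v) * (1 + (y v - y u)⁻¹) =
      pairProd y * (1 + (y u - y v)⁻¹) := by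
  have hlt : u < v := Fin.lt_def.2 (by omega)
  have hpair : ∀ w : Fin k → K, pairProd w =
      ∏ p ∈ univ.filter (fun p : Fin k × Fin k => p.1 < p.2), (1 + (w p.2 - w p.1)⁻¹) := by
    intro w
    rw [pairProd, prod_filter, ← univ_product_univ, prod_product]
    refine prod_congr rfl fun i _ => ?_
    rw [← prod_filter]
    exact prod_congr (by ext; simp) fun _ _ => rfl
  have hmem : (u, v) ∈ univ.filter (fun p : Fin k × Fin k => p.1 < p.2) := by simpa using hlt
  rw [hpair, hpair, ← mul_prod_erase _ _ hmem, ← mul_prod_erase _ _ hmem]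
  have hrest : ∏ p ∈ (univ.filter (fun p : Fin k × Fin k => p.1 < p.2)).erase (u, v),
      (1 + ((y ∘ Equiv.swap u v) p.2 - (y ∘ Equiv.swap u v) p.1)⁻¹) =
      ∏ p ∈ (univ.filter (fun p : Fin k × Fin k => p.1 < p.2)).erase (u, v),
        (1 + (y p.2 - y p.1)⁻¹) := by
    have hmaps : ∀ p ∈ (univ.filter (fun p : Fin k × Fin k => p.1 < p.2)).erase (u, v),
        (Equiv.swap u v p.1, Equiv.swap u v p.2) ∈
          (univ.filter (fun p : Fin k × Fin k => p.1 < p.2)).erase (u, v) := by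
      rintro ⟨p, q⟩ h
      simp only [mem_erase, mem_filter, mem_univ, true_and, ne_eq, Prod.mk.injEq,
        Equiv.swap_apply_def, Fin.ext_iff, Fin.lt_def] at h ⊢
      split_ifs <;> omega
    refine prod_nbij' (fun p => (Equiv.swap u v p.1, Equiv.swap u v p.2))
      (fun p => (Equiv.swap u v p.1, Equiv.swap u v p.2)) hmaps hmaps ?_ ?_ ?_
    · simp
    · simp
    · simp
  rw [hrest]
  simp only [Function.comp_apply, Equiv.swap_apply_left, Equiv.swap_apply_right]
  ring

/-- If a representation `ρ` of a finite group acts on generators by the operators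
`f ↦ t f - (f - t f) / c`, then its symmetrizer agrees, up to normalization, with the twisted
symmetrizer `f ↦ ∑ g, g (f * d)`, as soon as `d * (1 + 1/c)` is fixed by each generator. -/
lemma sum_rep_mul_sum_eq {𝕜 K G : Type*} [Field 𝕜] [Field K] [CharZero K] [Algebra 𝕜 K]
    [Group G] [Fintype G] (α : G →* (K ≃ₐ[𝕜] K)) (ρ : G →* Module.End 𝕜 K) (d : K) (S : Set G)
    (hS : Submonoid.closure S = ⊤)
    (h : ∀ t ∈ S, ∃ c : K, (∀ f, ρ t f = α t f - (f - α t f) * c⁻¹) ∧ α t c = -c ∧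
      α t (d * (1 + c⁻¹)) = d * (1 + c⁻¹)) (f : K) :
    (∑ g, ρ g f) * ∑ g, α g d = (Fintype.card G : K) * ∑ g, α g (f * d) := by
  have habsorb : ∀ g f, ∑ x, α x (ρ g f * d) = ∑ x, α x (f * d) := by
    intro g
    have hg : g ∈ Submonoid.closure S := hS ▸ Submonoid.mem_top g
    induction hg using Submonoid.closure_induction with
    | one => simp
    | mul g g' _ _ hg hg' =>
      intro f
      rw [map_mul, Module.End.mul_apply, hg, hg']
    | mem t ht =>
      intro f
      obtain ⟨c, hρ, -, hd⟩ := h t ht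
      have hsplit : ∀ x, α x (ρ t f * d) =
          α (x * t) (f * (d * (1 + c⁻¹))) - α x (f * (d * (1 + c⁻¹))) + α x (f * d) := by
        intro x
        rw [map_mul α, AlgEquiv.mul_apply, map_mul (α t), hd, ← map_sub, ← map_add, hρ]
        congr 1
        ring
      simp only [hsplit, sum_add_distrib, sum_sub_distrib]
      have hshift := Equiv.sum_comp (Equiv.mulRight t) (fun x => α x (f * (d * (1 + c⁻¹))))
      rw [Equiv.coe_mulRight] at hshift
      rw [hshift, sub_self, zero_add]
  have hinv : ∀ g, α g (∑ x, ρ x f) = ∑ x, ρ x f := by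
    intro g
    have hg : g ∈ Submonoid.closure S := hS ▸ Submonoid.mem_top g
    induction hg using Submonoid.closure_induction with
    | one => simp
    | mul g g' _ _ hg hg' => rw [map_mul α, AlgEquiv.mul_apply, hg', hg]
    | mem t ht =>
      obtain ⟨c, hρ, hc, -⟩ := h t ht
      have hfix : ρ t (∑ x, ρ x f) = ∑ x, ρ x f := by
        rw [map_sum]
        simp only [← Module.End.mul_apply, ← map_mul]
        exact Equiv.sum_comp (Equiv.mulLeft t) (fun x => ρ x f)
      have hne : (1 + c⁻¹ : K) ≠ 0 := by
        intro h0
        have h1 := congrArg (α t) h0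
        rw [map_add, map_one, map_inv₀, hc, inv_neg, map_zero] at h1
        have h2 : (2 : K) = 0 := by linear_combination h0 + h1
        exact two_ne_zero h2
      rw [hρ] at hfix
      have hmul : (1 + c⁻¹) * (α t (∑ x, ρ x f) - ∑ x, ρ x f) = 0 := by
        linear_combination hfix
      exact sub_eq_zero.1 ((mul_eq_zero.1 hmul).resolve_left hne)
  calc (∑ g, ρ g f) * ∑ g, α g d = ∑ g, α g ((∑ x, ρ x f) * d) := by
        simp only [map_mul (α _) _ d, hinv, mul_sum]
    _ = ∑ x, ∑ g, α g (ρ x f * d) := by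
        simp only [sum_mul, map_sum (α _)]
        exact sum_comm
    _ = (Fintype.card G : K) * ∑ g, α g (f * d) := by
        simp only [habsorb, sum_const, nsmul_eq_mul, card_univ]

/-- Adjacent transpositions of `Fin k`. -/
def adjacentSwaps (k : ℕ) : Set (Equiv.Perm (Fin k)) :=
  {t | ∃ u v : Fin k, (v : ℕ) = u + 1 ∧ t = Equiv.swap u v}

lemma closure_adjacentSwaps (k : ℕ) : Submonoid.closure (adjacentSwaps k) = ⊤ := by
  cases k with
  | zero => exact Subsingleton.elim _ _
  | succ k =>
    refine top_unique ?_
    rw [← Equiv.Perm.mclosure_swap_castSucc_succ]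
    refine Submonoid.closure_mono ?_
    rintro _ ⟨i, rfl⟩
    exact ⟨i.castSucc, i.succ, by simp, rfl⟩

lemma closure_inl_union_inr {M N : Type*} [Monoid M] [Monoid N] {S : Set M} {T : Set N}
    (hS : Submonoid.closure S = ⊤) (hT : Submonoid.closure T = ⊤) :
    Submonoid.closure (MonoidHom.inl M N '' S ∪ MonoidHom.inr M N '' T) = ⊤ := by
  refine top_unique ?_
  rintro ⟨x, y⟩ -
  have hx : MonoidHom.inl M N x ∈ Submonoid.closure (MonoidHom.inl M N '' S) := by
    rw [← MonoidHom.map_mclosure, hS]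
    exact ⟨x, trivial, rfl⟩
  have hy : MonoidHom.inr M N y ∈ Submonoid.closure (MonoidHom.inr M N '' T) := by
    rw [← MonoidHom.map_mclosure, hT]
    exact ⟨y, trivial, rfl⟩
  have hxy := mul_mem (Submonoid.closure_mono Set.subset_union_left hx)
    (Submonoid.closure_mono (Set.subset_union_right (s := MonoidHom.inl M N '' S)) hy)
  simpa using hxy

lemma map_pairProd {K L : Type*} [Field K] [Field L] (φ : K →+* L) {k : ℕ} (y : Fin k → K) :
    φ (pairProd y) = pairProd (φ ∘ y) := by
  simp [pairProd, map_prod]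

lemma map_boxSum {K L : Type*} [Field K] [Field L] (φ : K →+* L) {r m : ℕ} (a : Fin r → K)
    (b : Fin m → K) : φ (boxSum a b) = boxSum (φ ∘ a) (φ ∘ b) := by
  simp only [boxSum, map_sum, map_prod, map_sub, map_mul, map_one, map_inv₀, apply_ite φ,
    map_neg, Function.comp_apply]

section RationalFunctions

variable {𝕜 : Type*} [Field 𝕜]

lemma ratVar_injective_s10 (n : ℕ) (K : Type*) [Field K] [Algebra (MvPolynomial (Fin n) 𝕜) K]
    [IsFractionRing (MvPolynomial (Fin n) 𝕜) K] : Function.Injective (ratVar 𝕜 n K) :=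
  (IsFractionRing.injective (MvPolynomial (Fin n) 𝕜) K).comp (MvPolynomial.X_injective (R := 𝕜))

lemma algEquiv_ext_ratVar_s10 {n : ℕ} {K : Type*} [Field K] [Algebra 𝕜 K]
    [Algebra (MvPolynomial (Fin n) 𝕜) K] [IsScalarTower 𝕜 (MvPolynomial (Fin n) 𝕜) K]
    [IsFractionRing (MvPolynomial (Fin n) 𝕜) K] {φ ψ : K ≃ₐ[𝕜] K}
    (h : ∀ i, φ (ratVar 𝕜 n K i) = ψ (ratVar 𝕜 n K i)) : φ = ψ := by
  have hpoly : ((φ : K →ₐ[𝕜] K).comp (IsScalarTower.toAlgHom 𝕜 (MvPolynomial (Fin n) 𝕜) K)) =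
      (ψ : K →ₐ[𝕜] K).comp (IsScalarTower.toAlgHom 𝕜 (MvPolynomial (Fin n) 𝕜) K) :=
    MvPolynomial.algHom_ext fun i => h i
  have hring : ((φ : K →ₐ[𝕜] K) : K →+* K) = ((ψ : K →ₐ[𝕜] K) : K →+* K) :=
    IsLocalization.ringHom_ext (nonZeroDivisors (MvPolynomial (Fin n) 𝕜))
      (RingHom.ext fun p => DFunLike.congr_fun hpoly p)
  exact AlgEquiv.ext fun x => DFunLike.congr_fun hring x

/-- The action of permutations on rational functions as a group homomorphism. -/
def permAction {n : ℕ} {K : Type*} [Field K] [Algebra 𝕜 K]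
    [Algebra (MvPolynomial (Fin n) 𝕜) K] [IsScalarTower 𝕜 (MvPolynomial (Fin n) 𝕜) K]
    [IsFractionRing (MvPolynomial (Fin n) 𝕜) K] (s : Equiv.Perm (Fin n) → (K ≃ₐ[𝕜] K))
    (hs : ∀ (σ : Equiv.Perm (Fin n)) (i : Fin n), s σ (ratVar 𝕜 n K i) = ratVar 𝕜 n K (σ i)) :
    Equiv.Perm (Fin n) →* (K ≃ₐ[𝕜] K) :=
  MonoidHom.mk' s fun σ τ => algEquiv_ext_ratVar_s10 (n := n) fun i => by simp [hs]

end RationalFunctions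

/-- The two blocks of `Fin (r + m)`, each listed in reverse order. -/
def revBlocks (r m : ℕ) : Fin r ⊕ Fin m ≃ Fin (r + m) :=
  (Equiv.sumCongr Fin.revPerm Fin.revPerm).trans finSumFinEquiv

lemma revBlocks_inl_val (r m : ℕ) (i : Fin r) :
    (revBlocks r m (Sum.inl i) : ℕ) = r - (i + 1) := by
  simp [revBlocks]

lemma revBlocks_inr_val (r m : ℕ) (j : Fin m) :
    (revBlocks r m (Sum.inr j) : ℕ) = r + (m - (j + 1)) := by
  simp [revBlocks]

/-- The embedding of `S_r × S_m` into `S_{r+m}` as a Young subgroup. -/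
def youngHom (r m : ℕ) :
    Equiv.Perm (Fin r) × Equiv.Perm (Fin m) →* Equiv.Perm (Fin (r + m)) :=
  (revBlocks r m).permCongrHom.toMonoidHom.comp (Equiv.Perm.sumCongrHom (Fin r) (Fin m))

lemma youngHom_apply (r m : ℕ) (g : Equiv.Perm (Fin r) × Equiv.Perm (Fin m)) (z : Fin r ⊕ Fin m) :
    youngHom r m g (revBlocks r m z) = revBlocks r m (Sum.map g.1 g.2 z) := by
  simp [youngHom, Equiv.permCongrHom, Equiv.permCongr_apply]

lemma youngHom_injective (r m : ℕ) : Function.Injective (youngHom r m) :=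
  (revBlocks r m).permCongrHom.injective.comp Equiv.Perm.sumCongrHom_injective

lemma mem_range_youngHom {r m : ℕ} (σ : Equiv.Perm (Fin (r + m))) :
    (∃ g, youngHom r m g = σ) ↔ ∀ x : Fin (r + m), ((x : ℕ) < r ↔ (σ x : ℕ) < r) := by
  have hlt : ∀ z, (revBlocks r m z : ℕ) < r ↔ z ∈ Set.range Sum.inl := by
    rintro (i | j)
    · have := i.isLt
      simp only [revBlocks_inl_val, Set.mem_range_self, iff_true]
      omega
    · simp [revBlocks_inr_val]
  constructor
  · rintro ⟨g, rfl⟩ x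
    obtain ⟨z, rfl⟩ := (revBlocks r m).surjective x
    rw [youngHom_apply, hlt, hlt]
    rcases z with z | z <;> simp
  · intro h
    have hmaps : Set.MapsTo ((revBlocks r m).symm.permCongrHom σ) (Set.range Sum.inl)
        (Set.range Sum.inl) := by
      intro z hz
      rw [← hlt] at hz ⊢
      simpa [Equiv.permCongrHom, Equiv.permCongr_apply] using (h _).1 hz
    obtain ⟨g, hg⟩ := Equiv.Perm.mem_sumCongrHom_range_of_perm_mapsTo_inl hmaps
    refine ⟨g, ?_⟩
    change (revBlocks r m).permCongrHom (Equiv.Perm.sumCongrHom (Fin r) (Fin m) g) = σ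
    rw [hg, ← Equiv.permCongrHom_symm, MulEquiv.apply_symm_apply]

lemma youngHom_inl_swap {r m : ℕ} (u v : Fin r) :
    youngHom r m (Equiv.swap u v, 1) =
      Equiv.swap (revBlocks r m (Sum.inl u)) (revBlocks r m (Sum.inl v)) := by
  refine Equiv.ext fun x => ?_
  obtain ⟨z, rfl⟩ := (revBlocks r m).surjective x
  rw [youngHom_apply, ← (revBlocks r m).injective.map_swap]
  rcases z with z | z
  · simp [Sum.inl_injective.map_swap]
  · simp [Equiv.swap_apply_of_ne_of_ne]

lemma youngHom_inr_swap {r m : ℕ} (u v : Fin m) :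
    youngHom r m (1, Equiv.swap u v) =
      Equiv.swap (revBlocks r m (Sum.inr u)) (revBlocks r m (Sum.inr v)) := by
  refine Equiv.ext fun x => ?_
  obtain ⟨z, rfl⟩ := (revBlocks r m).surjective x
  rw [youngHom_apply, ← (revBlocks r m).injective.map_swap]
  rcases z with z | z
  · simp [Equiv.swap_apply_of_ne_of_ne]
  · simp [Sum.inr_injective.map_swap]

/-- `boxSum` of reversed variable lists in the original order of the variables. -/
lemma boxSum_comp_rev {K : Type*} [Field K] {r m : ℕ} (a : Fin r → K) (b : Fin m → K) :
    boxSum a (b ∘ Fin.rev) =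
      ∑ mu ∈ univ.filter (fun mu : Fin r → Fin (m + 1) =>
          ∀ i j : Fin r, i ≤ j → (mu j : ℕ) ≤ (mu i : ℕ)),
        ∏ i : Fin r, ∏ j : Fin m,
          (1 - (if (j : ℕ) < (mu i : ℕ) then (1 : K) else -1) * (a i - b j)⁻¹) := by
  refine sum_congr rfl fun mu _ => prod_congr rfl fun i _ => ?_
  rw [← Equiv.prod_comp Fin.revPerm]
  refine prod_congr rfl fun j _ => ?_
  have := j.isLt
  simp only [Fin.revPerm_apply, Fin.val_rev, Function.comp_apply, Fin.rev_rev]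
  congr 3
  simp only [eq_iff_iff]
  omega

/-- The main identity with the two block sizes `r` and `m` as parameters. -/
lemma sum_young_DMinus_boxSum {𝕜 : Type*} [Field 𝕜] [CharZero 𝕜] {r m : ℕ}
    {K : Type*} [Field K] [Algebra 𝕜 K] [Algebra (MvPolynomial (Fin (r + m)) 𝕜) K]
    [IsScalarTower 𝕜 (MvPolynomial (Fin (r + m)) 𝕜) K]
    [IsFractionRing (MvPolynomial (Fin (r + m)) 𝕜) K]
    (s : Equiv.Perm (Fin (r + m)) → (K ≃ₐ[𝕜] K))
    (hs : ∀ (σ : Equiv.Perm (Fin (r + m))) (i : Fin (r + m)),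
      s σ (ratVar 𝕜 (r + m) K i) = ratVar 𝕜 (r + m) K (σ i))
    (Ψ : Equiv.Perm (Fin (r + m)) →* Module.End 𝕜 K)
    (hΨ : ∀ (i : ℕ) (hi : i + 1 < r + m),
      Ψ (Equiv.swap ⟨i, Nat.lt_of_succ_lt hi⟩ ⟨i + 1, hi⟩) = DMinus 𝕜 K s i hi) :
    ∑ π ∈ univ.filter (fun σ : Equiv.Perm (Fin (r + m)) =>
        ∀ x : Fin (r + m), ((x : ℕ) < r ↔ ((σ x : ℕ) < r))),
      Ψ π (boxSum (fun i => ratVar 𝕜 (r + m) K (revBlocks r m (Sum.inl i)))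
        (fun j => ratVar 𝕜 (r + m) K (revBlocks r m (Sum.inr j)))) =
      ((r + m).factorial : K) := by
  have : CharZero K := charZero_of_injective_algebraMap (algebraMap 𝕜 K).injective
  set a : Fin r → K := fun i => ratVar 𝕜 (r + m) K (revBlocks r m (Sum.inl i))
  set b : Fin m → K := fun j => ratVar 𝕜 (r + m) K (revBlocks r m (Sum.inr j))
  have hab : Function.Injective (Sum.elim a b) := by
    convert (ratVar_injective_s10 (𝕜 := 𝕜) (r + m) K).comp (revBlocks r m).injective using 1
    funext z
    rcases z with z | z <;> rfl
  let α := (permAction s hs).comp (youngHom r m)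
  let ρ := Ψ.comp (youngHom r m)
  have hαa : ∀ g, α g ∘ a = a ∘ g.1 := fun g => by
    funext i
    exact (hs (youngHom r m g) _).trans (by rw [youngHom_apply]; rfl)
  have hαb : ∀ g, α g ∘ b = b ∘ g.2 := fun g => by
    funext j
    exact (hs (youngHom r m g) _).trans (by rw [youngHom_apply]; rfl)
  have hαpa : ∀ g, α g (pairProd a) = pairProd (a ∘ g.1) := fun g =>
    (map_pairProd (α g : K →+* K) a).trans (congrArg pairProd (hαa g))
  have hαpb : ∀ g, α g (pairProd b) = pairProd (b ∘ g.2) := fun g =>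
    (map_pairProd (α g : K →+* K) b).trans (congrArg pairProd (hαb g))
  have hαbox : ∀ g, α g (boxSum a b) = boxSum (a ∘ g.1) (b ∘ g.2) := fun g =>
    (map_boxSum (α g : K →+* K) a b).trans (congrArg₂ boxSum (hαa g) (hαb g))
  have hρ : ∀ g (p q : Fin (r + m)), (p : ℕ) = q + 1 → youngHom r m g = Equiv.swap p q → ∀ f,
      ρ g f = α g f - (f - α g f) * (ratVar 𝕜 (r + m) K p - ratVar 𝕜 (r + m) K q)⁻¹ := by
    intro g p q hpq hg f
    obtain ⟨p, hp⟩ := p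
    obtain rfl : p = q + 1 := hpq
    change Ψ (youngHom r m g) f = s (youngHom r m g) f - (f - s (youngHom r m g) f) * _
    rw [hg, Equiv.swap_comm, hΨ q hp]
    rfl
  have hsym := sum_rep_mul_sum_eq α ρ (pairProd a * pairProd b) _
    (closure_inl_union_inr (closure_adjacentSwaps r) (closure_adjacentSwaps m)) (by
      rintro t (⟨_, ⟨u, v, huv, rfl⟩, rfl⟩ | ⟨_, ⟨u, v, huv, rfl⟩, rfl⟩)
      · have hau := congrFun (hαa (Equiv.swap u v, 1)) u
        have hav := congrFun (hαa (Equiv.swap u v, 1)) v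
        simp only [Function.comp_apply, Equiv.swap_apply_left, Equiv.swap_apply_right] at hau hav
        refine ⟨a u - a v, hρ _ _ _ ?_ (youngHom_inl_swap u v), ?_, ?_⟩
        · have := v.isLt
          rw [revBlocks_inl_val, revBlocks_inl_val]
          omega
        · rw [MonoidHom.inl_apply, map_sub, hau, hav, neg_sub]
        · rw [MonoidHom.inl_apply, map_mul, map_mul, map_add, map_one, map_inv₀, map_sub, hau,
            hav, hαpa, hαpb]
          have := pairProd_comp_swap a u v huv
          simp only [Equiv.Perm.coe_one, Function.comp_id]
          linear_combination pairProd b * this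
      · have hbu := congrFun (hαb (1, Equiv.swap u v)) u
        have hbv := congrFun (hαb (1, Equiv.swap u v)) v
        simp only [Function.comp_apply, Equiv.swap_apply_left, Equiv.swap_apply_right] at hbu hbv
        refine ⟨b u - b v, hρ _ _ _ ?_ (youngHom_inr_swap u v), ?_, ?_⟩
        · have := v.isLt
          rw [revBlocks_inr_val, revBlocks_inr_val]
          omega
        · rw [MonoidHom.inr_apply, map_sub, hbu, hbv, neg_sub]
        · rw [MonoidHom.inr_apply, map_mul, map_mul, map_add, map_one, map_inv₀, map_sub, hbu,
            hbv, hαpa, hαpb]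
          have := pairProd_comp_swap b u v huv
          simp only [Equiv.Perm.coe_one, Function.comp_id]
          linear_combination pairProd a * this) (boxSum a b)
  simp only [map_mul (α _), hαpa, hαpb, hαbox, Fintype.sum_prod_type] at hsym
  rw [sum_boxSum_comp_perm r m a b hab, ← sum_mul_sum,
    sum_pairProd_comp_perm r a (hab.comp Sum.inl_injective),
    sum_pairProd_comp_perm m b (hab.comp Sum.inr_injective), ← Fintype.sum_prod_type'] at hsym
  have hfact : (r.factorial * m.factorial : K) ≠ 0 := by
    exact_mod_cast (mul_pos r.factorial_pos m.factorial_pos).ne'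
  have hmain : ∑ g, ρ g (boxSum a b) = ((r + m).factorial : K) := by
    refine mul_right_cancel₀ hfact (hsym.trans ?_)
    simp [Fintype.card_prod, Fintype.card_perm, mul_comm]
  rw [← hmain]
  symm
  refine sum_bij (fun g _ => youngHom r m g) (fun g _ => ?_)
    (fun g _ g' _ h => youngHom_injective r m h) (fun σ hσ => ?_) (fun g _ => rfl)
  · simpa using (mem_range_youngHom _).1 ⟨g, rfl⟩
  · obtain ⟨g, hg⟩ := (mem_range_youngHom σ).2 (by simpa using hσ)
    exact ⟨g, mem_univ g, hg⟩

lemma sum_DMinus_action_eq_factorial_add {𝕜 : Type*} [Field 𝕜] [CharZero 𝕜] {n r m : ℕ}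
    (hnm : n = r + m)
    {K : Type*} [Field K] [Algebra 𝕜 K] [Algebra (MvPolynomial (Fin n) 𝕜) K]
    [IsScalarTower 𝕜 (MvPolynomial (Fin n) 𝕜) K]
    [IsFractionRing (MvPolynomial (Fin n) 𝕜) K]
    (s : Equiv.Perm (Fin n) → (K ≃ₐ[𝕜] K))
    (hs : ∀ (σ : Equiv.Perm (Fin n)) (i : Fin n), s σ (ratVar 𝕜 n K i) = ratVar 𝕜 n K (σ i))
    (Ψ : Equiv.Perm (Fin n) →* Module.End 𝕜 K)
    (hΨ : ∀ (i : ℕ) (hi : i + 1 < n),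
      Ψ (Equiv.swap ⟨i, Nat.lt_of_succ_lt hi⟩ ⟨i + 1, hi⟩) = DMinus 𝕜 K s i hi) :
    ∑ π ∈ univ.filter
        (fun σ : Equiv.Perm (Fin n) => ∀ x : Fin n, ((x : ℕ) < r ↔ ((σ x : ℕ) < r))),
      Ψ π (∑ mu ∈ univ.filter
          (fun mu : Fin r → Fin (m + 1) =>
            ∀ a b : Fin r, a ≤ b → (mu b : ℕ) ≤ (mu a : ℕ)),
        ∏ i : Fin r, ∏ j : Fin m,
          (1 - (if (j : ℕ) < (mu i : ℕ) then (1 : K) else -1) *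
            (ratVar 𝕜 n K ⟨r - 1 - (i : ℕ), by have := i.isLt; omega⟩ -
              ratVar 𝕜 n K ⟨r + (j : ℕ), by have := j.isLt; omega⟩)⁻¹)) =
      (n.factorial : K) := by
  subst hnm
  rw [← sum_young_DMinus_boxSum s hs Ψ hΨ, ← boxSum_comp_rev
    (fun i : Fin r => ratVar 𝕜 (r + m) K ⟨r - 1 - (i : ℕ), by have := i.isLt; omega⟩)
    (fun j : Fin m => ratVar 𝕜 (r + m) K ⟨r + (j : ℕ), by have := j.isLt; omega⟩)]
  refine sum_congr rfl fun π _ => congrArg (Ψ π) (congrArg₂ boxSum ?_ ?_)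
  · funext i
    refine congrArg (ratVar 𝕜 (r + m) K) (Fin.ext ?_)
    rw [revBlocks_inl_val]
    simp only
    omega
  · funext j
    refine congrArg (ratVar 𝕜 (r + m) K) (Fin.ext ?_)
    rw [revBlocks_inr_val]
    simp

end Helpers

/-- Fix `0 ≤ r ≤ n` and let `Ψ : Sₙ → End_𝕜(K)` be any monoid
homomorphism sending each simple transposition to the corresponding operator `Dᵢ⁻`.
Summing, over all `π` in the Young subgroup `S_r × S_{n−r}` of `Sₙ` (those permutations
preserving both blocks of indices), the value of `Ψ π` on
`∑_{μ ∈ P_{r,n}} ∏_{i=1}^{r} ∏_{j=1}^{n−r} (1 − ε_{i,j}(μ)·y_{i,j})` gives `n!`.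
Here (in the `1`-indexed notation of the paper) `μ` runs over partitions fitting in an
`r × (n−r)` box, `ε_{i,j}(μ) = 1` if `j ≤ μᵢ` and `−1` otherwise, and
`y_{i,j} = (x_{r+1−i} − x_{r+j})⁻¹`; below everything is `0`-indexed. -/
theorem sum_DMinus_action_eq_factorial
    (𝕜 : Type*) [Field 𝕜] [CharZero 𝕜] (n r : ℕ) (hn : 1 ≤ n) (hr : r ≤ n)
    (K : Type*) [Field K] [Algebra 𝕜 K] [Algebra (MvPolynomial (Fin n) 𝕜) K]
    [IsScalarTower 𝕜 (MvPolynomial (Fin n) 𝕜) K]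
    [IsFractionRing (MvPolynomial (Fin n) 𝕜) K]
    (s : Equiv.Perm (Fin n) → (K ≃ₐ[𝕜] K))
    (hs : ∀ (σ : Equiv.Perm (Fin n)) (i : Fin n), s σ (ratVar 𝕜 n K i) = ratVar 𝕜 n K (σ i))
    (Ψ : Equiv.Perm (Fin n) →* Module.End 𝕜 K)
    (hΨ : ∀ (i : ℕ) (hi : i + 1 < n),
      Ψ (Equiv.swap ⟨i, Nat.lt_of_succ_lt hi⟩ ⟨i + 1, hi⟩) = DMinus 𝕜 K s i hi) :
    ∑ π ∈ Finset.univ.filter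
        (fun σ : Equiv.Perm (Fin n) => ∀ x : Fin n, ((x : ℕ) < r ↔ ((σ x : ℕ) < r))),
      Ψ π (∑ mu ∈ Finset.univ.filter
          (fun mu : Fin r → Fin (n - r + 1) =>
            ∀ a b : Fin r, a ≤ b → (mu b : ℕ) ≤ (mu a : ℕ)),
        ∏ i : Fin r, ∏ j : Fin (n - r),
          (1 - (if (j : ℕ) < (mu i : ℕ) then (1 : K) else -1) *
            (ratVar 𝕜 n K ⟨r - 1 - (i : ℕ), by have := i.isLt; omega⟩ -
              ratVar 𝕜 n K ⟨r + (j : ℕ), by have := j.isLt; omega⟩)⁻¹)) =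
      (n.factorial : K) := by
  exact sum_DMinus_action_eq_factorial_add (Nat.add_sub_cancel' hr).symm s hs Ψ hΨ
end
end
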